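/- arXiv:2512.14497 — 2 statements merged into one kernel-verified Lean document; each statement's English description precedes it below -/
import Mathlib

section
/- (Theorem 5) Let H := A ⊗ I_m + I_n ⊗ B with A an n×n and B an m×m Hermitian matrix, let ρ be an nm×nm density matrix, and let (P_k) be a family of pairwise-orthogonal n×n orthogonal projections summing to I_n such that ∑_k P_k ρ_a P_k = ρ_a, where ρ_a is the n×n matrix with entries (ρ_a)_{i i'} = ∑_j ρ_{(i,j),(i',j)}. Then, with Π(ρ) := ∑_k (P_k ⊗ I_m) ρ (P_k ⊗ I_m), one has ξ(ρ,H) − ξ(Π(ρ),H) = E_p(Π(ρ),H) − E_p(ρ,H) ≥ 0. -/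
/-!
Expanding `Tr (M ρ M* H)` in eigenbases of `ρ` and `H` gives `∑ i j, |⟨w_i, M u_j⟩|² λ_j ε_i`.
Summed over a Kraus family that is unital and trace preserving, the coefficients form a doubly
stochastic matrix, so by Birkhoff's theorem and the rearrangement inequality the sum is at least
`E_p(ρ, H)`. For a single unitary the bound is attained, hence `ξ(ρ, H) = Tr (ρ H) - E_p(ρ, H)`.
Following a unital trace-preserving map by a unitary that is optimal for its output shows that such
a map cannot lower the passive energy. For a non-interacting `H` the energy `Tr (ρ H)` depends only
on the two marginals of `ρ`, which `Π` leaves unchanged.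
-/

open scoped BigOperators ComplexOrder
open Matrix Kronecker

/-- Nondecreasing rearrangement of a finite real-valued family. -/
noncomputable def sortUp {ι : Type*} [Fintype ι] (f : ι → ℝ) : Fin (Fintype.card ι) → ℝ :=
  (f ∘ (Fintype.equivFin ι).symm) ∘ Tuple.sort (f ∘ (Fintype.equivFin ι).symm)

/-- Nonincreasing rearrangement of a finite real-valued family. -/
noncomputable def sortDown {ι : Type*} [Fintype ι] (f : ι → ℝ) : Fin (Fintype.card ι) → ℝ :=
  fun i => sortUp f i.rev

/-- Ergotropy ξ(ρ,H) = Tr(ρH) − inf over unitaries V of Tr(V ρ V* H). -/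
noncomputable def ergotropy {ι : Type*} [Fintype ι] [DecidableEq ι] (ρ H : Matrix ι ι ℂ) : ℝ :=
  ((ρ * H).trace).re -
    ⨅ V : Matrix.unitaryGroup ι ℂ,
      (((V : Matrix ι ι ℂ) * ρ * star (V : Matrix ι ι ℂ) * H).trace).re

/-- Passive energy E_p(ρ,H) = ∑ λ_i^↓ ε_i^↑. -/
noncomputable def passiveEnergy {ι : Type*} [Fintype ι] [DecidableEq ι]
    {ρ H : Matrix ι ι ℂ} (hρ : ρ.IsHermitian) (hH : H.IsHermitian) : ℝ :=
  ∑ i, sortDown hρ.eigenvalues i * sortUp hH.eigenvalues i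

/-- |u⟩⟨u|, the matrix with entries u_i conj(u_j). -/
noncomputable def ketbra {ι : Type*} (u : ι → ℂ) : Matrix ι ι ℂ := Matrix.vecMulVec u (star u)

/-- Tensor (Kronecker) product of vectors: (u ⊗ v)_(i,j) = u_i v_j. -/
noncomputable def vecTensor {ιa ιb : Type*} (u : ιa → ℂ) (v : ιb → ℂ) : ιa × ιb → ℂ :=
  fun p => u p.1 * v p.2

/-- The local measurement channel Π(ρ) = ∑_k (P_k ⊗ I) ρ (P_k ⊗ I). -/
noncomputable def pinch {ιa ιb K : Type*} [Fintype ιa] [Fintype ιb] [Fintype K]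
    [DecidableEq ιa] [DecidableEq ιb]
    (P : K → Matrix ιa ιa ℂ) (ρ : Matrix (ιa × ιb) (ιa × ιb) ℂ) :
    Matrix (ιa × ιb) (ιa × ιb) ℂ :=
  ∑ k, (P k ⊗ₖ (1 : Matrix ιb ιb ℂ)) * ρ * (P k ⊗ₖ (1 : Matrix ιb ιb ℂ))

/-- Local ergotropy ξ^l(ρ,H) = Tr(ρH) − inf over local unitaries U⊗V of Tr((U⊗V) ρ (U⊗V)* H). -/
noncomputable def localErgotropy {n m : ℕ}
    (ρ H : Matrix (Fin n × Fin m) (Fin n × Fin m) ℂ) : ℝ :=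
  ((ρ * H).trace).re -
    ⨅ W : Matrix.unitaryGroup (Fin n) ℂ × Matrix.unitaryGroup (Fin m) ℂ,
      ((((W.1 : Matrix (Fin n) (Fin n) ℂ) ⊗ₖ (W.2 : Matrix (Fin m) (Fin m) ℂ)) * ρ *
        star ((W.1 : Matrix (Fin n) (Fin n) ℂ) ⊗ₖ (W.2 : Matrix (Fin m) (Fin m) ℂ)) * H).trace).re

/-- First marginal (partial trace over the second factor). -/
noncomputable def marginalA {n m : ℕ} (ρ : Matrix (Fin n × Fin m) (Fin n × Fin m) ℂ) :
    Matrix (Fin n) (Fin n) ℂ :=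
  Matrix.of fun i i' => ∑ j, ρ (i, j) (i', j)

/-- Second marginal (partial trace over the first factor). -/
noncomputable def marginalB {n m : ℕ} (ρ : Matrix (Fin n × Fin m) (Fin n × Fin m) ℂ) :
    Matrix (Fin m) (Fin m) ℂ :=
  Matrix.of fun j j' => ∑ i, ρ (i, j) (i, j')

section Rearrangement

variable {ι : Type*} [Fintype ι]

lemma monotone_sortUp (f : ι → ℝ) : Monotone (sortUp f) :=
  Tuple.monotone_sort _

lemma antitone_sortDown (f : ι → ℝ) : Antitone (sortDown f) :=
  fun _ _ hij => monotone_sortUp f (Fin.rev_le_rev.mpr hij)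

lemma exists_equiv_sortUp_eq_comp (f : ι → ℝ) :
    ∃ b : Fin (Fintype.card ι) ≃ ι, sortUp f = f ∘ b :=
  ⟨(Tuple.sort _).trans (Fintype.equivFin ι).symm, rfl⟩

lemma exists_equiv_sortDown_eq_comp (f : ι → ℝ) :
    ∃ b : Fin (Fintype.card ι) ≃ ι, sortDown f = f ∘ b := by
  obtain ⟨b, hb⟩ := exists_equiv_sortUp_eq_comp f
  exact ⟨Fin.revPerm.trans b, funext fun i => congrFun hb i.rev⟩

theorem isLeast_sortDown_dotProduct_sortUp (d e : ι → ℝ) :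
    IsLeast (Set.range fun σ : Equiv.Perm ι => (d ∘ σ) ⬝ᵥ e) (sortDown d ⬝ᵥ sortUp e) := by
  obtain ⟨a, ha⟩ := exists_equiv_sortDown_eq_comp d
  obtain ⟨b, hb⟩ := exists_equiv_sortUp_eq_comp e
  have reindex (σ : Equiv.Perm ι) :
      (d ∘ σ) ⬝ᵥ e = ∑ i, sortDown d ((b.trans σ).trans a.symm i) * sortUp e i := by
    simp [dotProduct, ha, hb, ← Equiv.sum_comp b fun i => d (σ i) * e i]
  refine ⟨⟨b.symm.trans a, (reindex _).trans ?_⟩, ?_⟩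
  · simp [dotProduct]
  · rintro _ ⟨σ, rfl⟩
    have hanti : Antivary (sortDown d) (sortUp e) :=
      (antitone_sortDown d).antivary (monotone_sortUp e)
    exact hanti.sum_mul_le_sum_comp_perm_mul.trans_eq (reindex σ).symm

theorem sortDown_dotProduct_sortUp_le_of_mem_doublyStochastic [DecidableEq ι] (d e : ι → ℝ)
    {S : Matrix ι ι ℝ} (hS : S ∈ doublyStochastic ℝ ι) :
    sortDown d ⬝ᵥ sortUp e ≤ (S *ᵥ d) ⬝ᵥ e := by
  have hlin : IsLinearMap ℝ fun T : Matrix ι ι ℝ => (T *ᵥ d) ⬝ᵥ e :=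
    ⟨fun T T' => by rw [add_mulVec, add_dotProduct],
      fun c T => by rw [smul_mulVec, smul_dotProduct]⟩
  rw [← SetLike.mem_coe, doublyStochastic_eq_convexHull_permMatrix] at hS
  refine convexHull_min ?_ (convex_halfSpace_ge hlin (sortDown d ⬝ᵥ sortUp e)) hS
  rintro _ ⟨σ, rfl⟩
  rw [Set.mem_ofPred_eq, permMatrix_mulVec]
  exact (isLeast_sortDown_dotProduct_sortUp d e).2 ⟨σ, rfl⟩

end Rearrangement

section KrausMap

variable {ι K R : Type*} [Fintype ι] [Fintype K] [Semiring R] [StarRing R]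

/-- The map `X ↦ ∑ k, M k X (M k)*` with Kraus operators `M`. -/
def krausMap (M : K → Matrix ι ι R) (X : Matrix ι ι R) : Matrix ι ι R :=
  ∑ k, M k * X * (M k)ᴴ

/-- The family `M` is the Kraus family of a bistochastic map: `krausMap M` is unital (first field)
and trace preserving (second field). -/
structure IsBistochastic [DecidableEq ι] (M : K → Matrix ι ι R) : Prop where
  sum_mul_conjTranspose : ∑ k, M k * (M k)ᴴ = 1
  sum_conjTranspose_mul : ∑ k, (M k)ᴴ * M k = 1

lemma conj_krausMap (V : Matrix ι ι R) (M : K → Matrix ι ι R) (X : Matrix ι ι R) :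
    V * krausMap M X * Vᴴ = krausMap (fun k => V * M k) X := by
  simp only [krausMap, Finset.mul_sum, Finset.sum_mul, conjTranspose_mul, Matrix.mul_assoc]

lemma IsBistochastic.conjTranspose [DecidableEq ι] {M : K → Matrix ι ι R}
    (hM : IsBistochastic M) : IsBistochastic fun k => (M k)ᴴ where
  sum_mul_conjTranspose := by
    simpa only [conjTranspose_conjTranspose] using hM.sum_conjTranspose_mul
  sum_conjTranspose_mul := by
    simpa only [conjTranspose_conjTranspose] using hM.sum_mul_conjTranspose

end KrausMap

section Unitary

variable {ι K R : Type*} [Fintype ι] [DecidableEq ι] [Fintype K] [CommRing R] [StarRing R]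
  {M : K → Matrix ι ι R}

lemma permMatrix_mem_unitaryGroup (σ : Equiv.Perm ι) : σ.permMatrix R ∈ unitaryGroup ι R := by
  rw [mem_unitaryGroup_iff, star_eq_conjTranspose, conjTranspose_permMatrix, ← permMatrix_mul,
    inv_mul_cancel, permMatrix_one]

lemma isBistochastic_unitary (V : unitaryGroup ι R) :
    IsBistochastic fun _ : Unit => (V : Matrix ι ι R) where
  sum_mul_conjTranspose := (Fintype.sum_unique _).trans (Unitary.mul_star_self_of_mem V.2)
  sum_conjTranspose_mul := (Fintype.sum_unique _).trans (Unitary.star_mul_self_of_mem V.2)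

lemma IsBistochastic.unitary_mul (hM : IsBistochastic M) (V : unitaryGroup ι R) :
    IsBistochastic fun k => (V : Matrix ι ι R) * M k where
  sum_mul_conjTranspose := by
    have h := conj_krausMap (V : Matrix ι ι R) M 1
    simp only [krausMap, Matrix.mul_one, hM.sum_mul_conjTranspose] at h
    exact h.symm.trans (Unitary.mul_star_self_of_mem V.2)
  sum_conjTranspose_mul := by
    have hV : (V : Matrix ι ι R)ᴴ * V = 1 := Unitary.star_mul_self_of_mem V.2
    simp only [conjTranspose_mul, Matrix.mul_assoc, ← Matrix.mul_assoc _ (V : Matrix ι ι R), hV,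
      Matrix.one_mul, hM.sum_conjTranspose_mul]

lemma IsBistochastic.mul_unitary (hM : IsBistochastic M) (V : unitaryGroup ι R) :
    IsBistochastic fun k => M k * (V : Matrix ι ι R) := by
  simpa only [Unitary.coe_star, ← star_eq_conjTranspose, star_mul, star_star] using
    (hM.conjTranspose.unitary_mul (star V)).conjTranspose

end Unitary

section NormSqMatrix

variable {ι κ 𝕜 : Type*} [RCLike 𝕜]

/-- The matrix of squared moduli `|X i j|²`, the transition probabilities when `X` is unitary. -/
def normSqMatrix (X : Matrix ι κ 𝕜) : Matrix ι κ ℝ :=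
  X.map fun z => ‖z‖ ^ 2

lemma normSqMatrix_conjTranspose (X : Matrix ι κ 𝕜) : normSqMatrix Xᴴ = (normSqMatrix X)ᵀ := by
  ext i j
  simp only [normSqMatrix, map_apply, conjTranspose_apply, transpose_apply, norm_star]

lemma normSqMatrix_permMatrix [DecidableEq ι] (σ : Equiv.Perm ι) :
    normSqMatrix (σ.permMatrix 𝕜) = σ.permMatrix ℝ := by
  ext i j
  simp [normSqMatrix, Equiv.Perm.permMatrix, PEquiv.toMatrix_apply, apply_ite]

lemma ofReal_sum_normSqMatrix_row [Fintype κ] (X : Matrix ι κ 𝕜) (i : ι) :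
    ((∑ j, normSqMatrix X i j : ℝ) : 𝕜) = (X * Xᴴ) i i := by
  simp [normSqMatrix, mul_apply, RCLike.mul_conj]

lemma sum_row_sum_normSqMatrix_eq_one [Fintype κ] [DecidableEq ι] {K : Type*} [Fintype K]
    {M : K → Matrix ι κ 𝕜} (hM : ∑ k, M k * (M k)ᴴ = 1) (i : ι) :
    ∑ j, (∑ k, normSqMatrix (M k)) i j = 1 := by
  apply RCLike.ofReal_injective (K := 𝕜)
  simp only [Matrix.sum_apply]
  rw [Finset.sum_comm, RCLike.ofReal_sum]
  simp only [ofReal_sum_normSqMatrix_row, ← Matrix.sum_apply, hM, one_apply_eq, RCLike.ofReal_one]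

lemma trace_conj_diagonal_mul_diagonal [Fintype ι] [Fintype κ] [DecidableEq ι] [DecidableEq κ]
    (X : Matrix ι κ 𝕜) (d : κ → ℝ) (e : ι → ℝ) :
    (X * diagonal (RCLike.ofReal ∘ d : κ → 𝕜) * Xᴴ * diagonal (RCLike.ofReal ∘ e : ι → 𝕜)).trace
      = (((normSqMatrix X *ᵥ d) ⬝ᵥ e : ℝ) : 𝕜) := by
  simp only [trace, diag_apply, mul_diagonal, mul_apply (N := Xᴴ), conjTranspose_apply,
    dotProduct, mulVec, normSqMatrix, map_apply, Function.comp_apply, RCLike.ofReal_sum,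
    RCLike.ofReal_mul, RCLike.ofReal_pow, ← RCLike.mul_conj, RCLike.star_def]
  exact Finset.sum_congr rfl fun i _ => congrArg (· * (e i : 𝕜)) <|
    Finset.sum_congr rfl fun j _ => mul_right_comm _ _ _

theorem IsBistochastic.sum_normSqMatrix_mem_doublyStochastic [Fintype ι] [DecidableEq ι]
    {K : Type*} [Fintype K] {M : K → Matrix ι ι 𝕜} (hM : IsBistochastic M) :
    ∑ k, normSqMatrix (M k) ∈ doublyStochastic ℝ ι := by
  refine mem_doublyStochastic_iff_sum.mpr
    ⟨fun i j => ?_, sum_row_sum_normSqMatrix_eq_one hM.sum_mul_conjTranspose, fun j => ?_⟩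
  · rw [Matrix.sum_apply]
    exact Finset.sum_nonneg fun k _ => sq_nonneg ‖M k i j‖
  · simpa only [normSqMatrix_conjTranspose, ← transpose_sum, transpose_apply] using
      sum_row_sum_normSqMatrix_eq_one hM.conjTranspose.sum_mul_conjTranspose j

end NormSqMatrix

section Eigenbases

variable {ι 𝕜 : Type*} [Fintype ι] [DecidableEq ι] [RCLike 𝕜]
  {ρ H : Matrix ι ι 𝕜} (hρ : ρ.IsHermitian) (hH : H.IsHermitian)

/-- The matrix `⟨w_i, M u_j⟩` of `M` from the eigenbasis `u` of `ρ` to the eigenbasis `w` of `H`. -/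
noncomputable def inEigenbases (M : Matrix ι ι 𝕜) : Matrix ι ι 𝕜 :=
  star (hH.eigenvectorUnitary : Matrix ι ι 𝕜) * M * hρ.eigenvectorUnitary

lemma IsBistochastic.inEigenbases {K : Type*} [Fintype K] {M : K → Matrix ι ι 𝕜}
    (hM : IsBistochastic M) : IsBistochastic fun k => inEigenbases hρ hH (M k) :=
  (hM.unitary_mul (star hH.eigenvectorUnitary)).mul_unitary hρ.eigenvectorUnitary

lemma exists_unitary_inEigenbases_eq (Q : unitaryGroup ι 𝕜) :
    ∃ V : unitaryGroup ι 𝕜, inEigenbases hρ hH V = Q := by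
  have hV : star hH.eigenvectorUnitary *
      (hH.eigenvectorUnitary * Q * star hρ.eigenvectorUnitary) * hρ.eigenvectorUnitary = Q := by
    simp only [mul_assoc, Unitary.star_mul_self, mul_one, ← mul_assoc (star hH.eigenvectorUnitary),
      one_mul]
  exact ⟨_, congrArg Subtype.val hV⟩

theorem trace_conj_mul_eq_normSqMatrix (M : Matrix ι ι 𝕜) :
    (M * ρ * Mᴴ * H).trace =
      (((normSqMatrix (inEigenbases hρ hH M) *ᵥ hρ.eigenvalues) ⬝ᵥ hH.eigenvalues : ℝ) : 𝕜) := by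
  rw [← trace_conj_diagonal_mul_diagonal]
  conv_lhs => rw [hρ.spectral_theorem, hH.spectral_theorem]
  simp only [inEigenbases, Unitary.conjStarAlgAut_apply, star_eq_conjTranspose,
    conjTranspose_mul, conjTranspose_conjTranspose, Matrix.mul_assoc]
  rw [trace_mul_comm (hH.eigenvectorUnitary : Matrix ι ι 𝕜)ᴴ]
  simp only [Matrix.mul_assoc]

end Eigenbases

section PassiveEnergy

variable {ι : Type*} [Fintype ι] [DecidableEq ι] {ρ H : Matrix ι ι ℂ}

theorem passiveEnergy_le_re_trace_krausMap {K : Type*} [Fintype K] (hρ : ρ.IsHermitian)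
    (hH : H.IsHermitian) {M : K → Matrix ι ι ℂ} (hM : IsBistochastic M) :
    passiveEnergy hρ hH ≤ (krausMap M ρ * H).trace.re := by
  calc passiveEnergy hρ hH
      ≤ ((∑ k, normSqMatrix (inEigenbases hρ hH (M k))) *ᵥ hρ.eigenvalues) ⬝ᵥ hH.eigenvalues :=
        sortDown_dotProduct_sortUp_le_of_mem_doublyStochastic _ _
          (hM.inEigenbases hρ hH).sum_normSqMatrix_mem_doublyStochastic
    _ = (krausMap M ρ * H).trace.re := by
        simp only [krausMap, Finset.sum_mul, trace_sum, trace_conj_mul_eq_normSqMatrix hρ hH,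
          sum_mulVec, sum_dotProduct, Complex.re_sum]
        rfl

theorem exists_unitary_re_trace_eq_passiveEnergy (hρ : ρ.IsHermitian) (hH : H.IsHermitian) :
    ∃ V : unitaryGroup ι ℂ, ((V : Matrix ι ι ℂ) * ρ * star (V : Matrix ι ι ℂ) * H).trace.re =
      passiveEnergy hρ hH := by
  obtain ⟨σ, hσ⟩ := (isLeast_sortDown_dotProduct_sortUp hρ.eigenvalues hH.eigenvalues).1
  obtain ⟨V, hV⟩ :=
    exists_unitary_inEigenbases_eq hρ hH ⟨_, permMatrix_mem_unitaryGroup (R := ℂ) σ⟩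
  refine ⟨V, ?_⟩
  rw [star_eq_conjTranspose, trace_conj_mul_eq_normSqMatrix hρ hH, hV, normSqMatrix_permMatrix,
    permMatrix_mulVec]
  exact hσ

theorem isLeast_passiveEnergy (hρ : ρ.IsHermitian) (hH : H.IsHermitian) :
    IsLeast (Set.range fun V : unitaryGroup ι ℂ =>
      ((V : Matrix ι ι ℂ) * ρ * star (V : Matrix ι ι ℂ) * H).trace.re) (passiveEnergy hρ hH) := by
  refine ⟨exists_unitary_re_trace_eq_passiveEnergy hρ hH, ?_⟩
  rintro _ ⟨V, rfl⟩
  simpa only [krausMap, Fintype.sum_unique, ← star_eq_conjTranspose] using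
    passiveEnergy_le_re_trace_krausMap hρ hH (isBistochastic_unitary V)

theorem ergotropy_eq_re_trace_sub_passiveEnergy (hρ : ρ.IsHermitian) (hH : H.IsHermitian) :
    ergotropy ρ H = (ρ * H).trace.re - passiveEnergy hρ hH :=
  congrArg (_ - ·) (isLeast_passiveEnergy hρ hH).csInf_eq

theorem passiveEnergy_le_passiveEnergy_krausMap {K : Type*} [Fintype K] (hρ : ρ.IsHermitian)
    (hH : H.IsHermitian) {M : K → Matrix ι ι ℂ} (hM : IsBistochastic M)
    (hMρ : (krausMap M ρ).IsHermitian) : passiveEnergy hρ hH ≤ passiveEnergy hMρ hH := by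
  obtain ⟨V, hV⟩ := exists_unitary_re_trace_eq_passiveEnergy hMρ hH
  rw [← hV, star_eq_conjTranspose, conj_krausMap]
  exact passiveEnergy_le_re_trace_krausMap hρ hH (hM.unitary_mul V)

end PassiveEnergy

section Marginals

variable {n m : ℕ}

lemma trace_mul_kronecker_one (X : Matrix (Fin n × Fin m) (Fin n × Fin m) ℂ)
    (A : Matrix (Fin n) (Fin n) ℂ) :
    (X * (A ⊗ₖ (1 : Matrix (Fin m) (Fin m) ℂ))).trace = (marginalA X * A).trace := by
  simp only [trace, diag_apply, mul_apply, Fintype.sum_prod_type, kroneckerMap_apply, one_apply,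
    marginalA, of_apply, Finset.sum_mul, mul_ite, mul_one, mul_zero, Finset.sum_ite_eq',
    Finset.mem_univ, if_true]
  exact Finset.sum_congr rfl fun i _ => Finset.sum_comm

lemma trace_mul_one_kronecker (X : Matrix (Fin n × Fin m) (Fin n × Fin m) ℂ)
    (B : Matrix (Fin m) (Fin m) ℂ) :
    (X * ((1 : Matrix (Fin n) (Fin n) ℂ) ⊗ₖ B)).trace = (marginalB X * B).trace := by
  simp only [trace, diag_apply, mul_apply, Fintype.sum_prod_type, kroneckerMap_apply, one_apply,
    marginalB, of_apply, Finset.sum_mul, ite_mul, mul_ite, one_mul, zero_mul, mul_zero,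
    Finset.sum_ite_irrel, Finset.sum_const_zero, Finset.sum_ite_eq', Finset.mem_univ, if_true]
  rw [Finset.sum_comm]
  exact Finset.sum_congr rfl fun j _ => Finset.sum_comm

end Marginals

lemma sum_kronecker {K l₁ l₂ l₃ l₄ R : Type*} [NonUnitalNonAssocSemiring R] (s : Finset K)
    (M : K → Matrix l₁ l₂ R) (N : Matrix l₃ l₄ R) :
    (∑ k ∈ s, M k) ⊗ₖ N = ∑ k ∈ s, M k ⊗ₖ N := by
  ext
  simp only [kroneckerMap_apply, Matrix.sum_apply, Finset.sum_mul]

lemma IsBistochastic.kronecker_one {ι κ K R : Type*} [Fintype ι] [Fintype κ] [Fintype K]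
    [DecidableEq ι] [DecidableEq κ] [CommRing R] [StarRing R] {M : K → Matrix ι ι R}
    (hM : IsBistochastic M) : IsBistochastic fun k => M k ⊗ₖ (1 : Matrix κ κ R) where
  sum_mul_conjTranspose := by
    simp only [conjTranspose_kronecker, conjTranspose_one, ← mul_kronecker_mul, Matrix.one_mul,
      ← sum_kronecker, hM.sum_mul_conjTranspose, one_kronecker_one]
  sum_conjTranspose_mul := by
    simp only [conjTranspose_kronecker, conjTranspose_one, ← mul_kronecker_mul, Matrix.one_mul,
      ← sum_kronecker, hM.sum_conjTranspose_mul, one_kronecker_one]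

section Pinch

variable {ιa ιb K : Type*} [Fintype ιa] [Fintype ιb] [Fintype K] [DecidableEq ιa] [DecidableEq ιb]

lemma pinch_eq_krausMap {P : K → Matrix ιa ιa ℂ} (hP : ∀ k, (P k).IsHermitian)
    (ρ : Matrix (ιa × ιb) (ιa × ιb) ℂ) :
    pinch P ρ = krausMap (fun k => P k ⊗ₖ (1 : Matrix ιb ιb ℂ)) ρ := by
  simp only [pinch, krausMap, conjTranspose_kronecker, (hP _).eq, conjTranspose_one]

lemma trace_pinch_mul (P : K → Matrix ιa ιa ℂ) (ρ X : Matrix (ιa × ιb) (ιa × ιb) ℂ) :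
    (pinch P ρ * X).trace = (ρ * pinch P X).trace := by
  simp only [pinch, Finset.sum_mul, Finset.mul_sum, trace_sum]
  refine Finset.sum_congr rfl fun k _ => ?_
  rw [Matrix.mul_assoc, Matrix.mul_assoc, trace_mul_comm]
  simp only [Matrix.mul_assoc]

lemma pinch_kronecker (P : K → Matrix ιa ιa ℂ) (A : Matrix ιa ιa ℂ) (B : Matrix ιb ιb ℂ) :
    pinch P (A ⊗ₖ B) = (∑ k, P k * A * P k) ⊗ₖ B := by
  simp only [pinch, ← mul_kronecker_mul, Matrix.one_mul, Matrix.mul_one, sum_kronecker]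

variable {n m : ℕ} (P : K → Matrix (Fin n) (Fin n) ℂ)
  (ρ : Matrix (Fin n × Fin m) (Fin n × Fin m) ℂ)

theorem marginalA_pinch : marginalA (pinch P ρ) = ∑ k, P k * marginalA ρ * P k := by
  refine ext_iff_trace_mul_right.mpr fun A => ?_
  rw [← trace_mul_kronecker_one, trace_pinch_mul, pinch_kronecker, trace_mul_kronecker_one]
  simp only [Finset.sum_mul, Finset.mul_sum, trace_sum]
  refine Finset.sum_congr rfl fun k _ => ?_
  rw [← Matrix.mul_assoc, trace_mul_comm]
  simp only [Matrix.mul_assoc]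

variable {P} in
theorem marginalB_pinch (hP : ∑ k, P k * P k = 1) : marginalB (pinch P ρ) = marginalB ρ := by
  refine ext_iff_trace_mul_right.mpr fun B => ?_
  rw [← trace_mul_one_kronecker, trace_pinch_mul, pinch_kronecker]
  simp only [Matrix.mul_one, hP, trace_mul_one_kronecker]

end Pinch

theorem emin_noninteracting_eq_passiveEnergy_diff_general {n m : ℕ}
    {A : Matrix (Fin n) (Fin n) ℂ} {B : Matrix (Fin m) (Fin m) ℂ}
    (hH : (A ⊗ₖ (1 : Matrix (Fin m) (Fin m) ℂ)
      + (1 : Matrix (Fin n) (Fin n) ℂ) ⊗ₖ B).IsHermitian)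
    {ρ : Matrix (Fin n × Fin m) (Fin n × Fin m) ℂ} (hρ : ρ.IsHermitian)
    {K : Type*} [Fintype K] {P : K → Matrix (Fin n) (Fin n) ℂ}
    (hPherm : ∀ k, (P k).IsHermitian) (hPsq : ∑ k, P k * P k = 1)
    (hPinv : ∑ k, P k * marginalA ρ * P k = marginalA ρ)
    (hPinch : (pinch P ρ).IsHermitian) :
    ergotropy ρ (A ⊗ₖ 1 + 1 ⊗ₖ B) - ergotropy (pinch P ρ) (A ⊗ₖ 1 + 1 ⊗ₖ B)
      = passiveEnergy hPinch hH - passiveEnergy hρ hH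
    ∧ 0 ≤ passiveEnergy hPinch hH - passiveEnergy hρ hH := by
  have henergy : (pinch P ρ * (A ⊗ₖ 1 + 1 ⊗ₖ B)).trace = (ρ * (A ⊗ₖ 1 + 1 ⊗ₖ B)).trace := by
    simp only [Matrix.mul_add, trace_add, trace_mul_kronecker_one, trace_mul_one_kronecker,
      marginalA_pinch, hPinv, marginalB_pinch ρ hPsq]
  have hbi : IsBistochastic P := by constructor <;> simpa only [(hPherm _).eq] using hPsq
  constructor
  · rw [ergotropy_eq_re_trace_sub_passiveEnergy hρ hH,
      ergotropy_eq_re_trace_sub_passiveEnergy hPinch hH, henergy, sub_sub_sub_cancel_left]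
  · simp only [pinch_eq_krausMap hPherm] at hPinch ⊢
    exact sub_nonneg.mpr <| passiveEnergy_le_passiveEnergy_krausMap hρ hH
      hbi.kronecker_one hPinch

/-- Theorem 5 of the paper: for non-interacting Hamiltonians,
EMIN equals the difference of passive energies, and is nonnegative. -/
theorem emin_noninteracting_eq_passiveEnergy_diff {n m : ℕ}
    {A : Matrix (Fin n) (Fin n) ℂ} {B : Matrix (Fin m) (Fin m) ℂ}
    (hA : A.IsHermitian) (hB : B.IsHermitian)
    (H : Matrix (Fin n × Fin m) (Fin n × Fin m) ℂ)
    (hHdef : H = A ⊗ₖ (1 : Matrix (Fin m) (Fin m) ℂ)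
        + (1 : Matrix (Fin n) (Fin n) ℂ) ⊗ₖ B)
    (hH : H.IsHermitian)
    {ρ : Matrix (Fin n × Fin m) (Fin n × Fin m) ℂ}
    (hρ : ρ.PosSemidef) (hρtr : ρ.trace = 1)
    {K : Type*} [Fintype K] (P : K → Matrix (Fin n) (Fin n) ℂ)
    (hPherm : ∀ k, (P k)ᴴ = P k) (hPidem : ∀ k, P k * P k = P k)
    (hPorth : ∀ k l, k ≠ l → P k * P l = 0)
    (hPsum : ∑ k, P k = (1 : Matrix (Fin n) (Fin n) ℂ))
    (hPinv : ∑ k, P k * marginalA ρ * P k = marginalA ρ)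
    (hPinch : (pinch P ρ).IsHermitian) :
    ergotropy ρ H - ergotropy (pinch P ρ) H
      = passiveEnergy hPinch hH - passiveEnergy hρ.isHermitian hH
    ∧ 0 ≤ passiveEnergy hPinch hH - passiveEnergy hρ.isHermitian hH := by
  subst hHdef
  exact emin_noninteracting_eq_passiveEnergy_diff_general hH hρ.isHermitian hPherm
    (by simpa only [hPidem] using hPsum) hPinv hPinch
end

section
/- (Ergotropic gap of product states under an entangled-ground-state Hamiltonian) Let H be an nm×nm Hermitian matrix (indexed by pairs) with smallest eigenvalue ε_0, and suppose that ⟨u ⊗ v, H (u ⊗ v)⟩ > ε_0 for every pair of unit vectors u ∈ ℂ^n, v ∈ ℂ^m, where (u ⊗ v)_{(i,j)} := u_i v_j. Then for every pair of unit vectors u_0 ∈ ℂ^n, v_0 ∈ ℂ^m, the pure product state ρ := |u_0 ⊗ v_0⟩⟨u_0 ⊗ v_0| satisfies ξ(ρ,H) > ξ^l(ρ,H), i.e., the ergotropic gap δ(ρ) = ξ(ρ,H) − ξ^l(ρ,H) is strictly positive. -/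
open scoped BigOperators ComplexOrder
open Matrix Kronecker

/-!
Unitary conjugation of a pure state `|w⟩⟨w|` moves the vector `w`, and unitaries act transitively on
unit vectors, so `ergotropy |w⟩⟨w|` is at least the energy released in passing from `w` to any other
unit vector, in particular to a ground state. A local unitary keeps a product vector a product
vector, and by compactness of the unitary group some pair of local unitaries attains the local
ergotropy. Hence the local ergotropy is the energy released in passing to a single product vector,
and that vector is not a ground state.
-/

lemma nonempty_of_dotProduct_eq_one {ι R : Type*} [Fintype ι] [NonAssocSemiring R] [Nontrivial R]
    {v w : ι → R} (h : v ⬝ᵥ w = 1) : Nonempty ι := by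
  by_contra hι
  rw [not_nonempty_iff] at hι
  simp [dotProduct] at h

section UnitaryMatrices

variable {ι 𝕜 : Type*} [Fintype ι] [RCLike 𝕜]

lemma norm_toLp_eq_one_iff {v : ι → 𝕜} : ‖WithLp.toLp 2 v‖ = 1 ↔ star v ⬝ᵥ v = 1 := by
  rw [← sq_eq_sq₀ (norm_nonneg _) zero_le_one, dotProduct_comm, ← EuclideanSpace.inner_toLp_toLp,
    inner_self_eq_norm_sq_to_K, one_pow]
  norm_cast

lemma exists_linearIsometryEquiv_apply_eq {E : Type*} [NormedAddCommGroup E]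
    [InnerProductSpace 𝕜 E] [FiniteDimensional 𝕜 E] {x y : E} (hx : ‖x‖ = 1) (hy : ‖y‖ = 1) :
    ∃ f : E ≃ₗᵢ[𝕜] E, f x = y := by
  let g : (𝕜 ∙ x) →ₗᵢ[𝕜] E := (𝕜 ∙ y).subtypeₗᵢ.comp
    ((LinearIsometryEquiv.toSpanUnitSingleton x hx).symm.trans
      (LinearIsometryEquiv.toSpanUnitSingleton y hy)).toLinearIsometry
  have hone : (LinearIsometryEquiv.toSpanUnitSingleton (𝕜 := 𝕜) x hx).symm
      ⟨x, Submodule.mem_span_singleton_self x⟩ = 1 :=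
    (LinearIsometryEquiv.symm_apply_eq _).mpr (by simp)
  have hgx : g ⟨x, Submodule.mem_span_singleton_self x⟩ = y := by
    simp [g, hone]
  refine ⟨g.extend.toLinearIsometryEquiv rfl, ?_⟩
  rw [LinearIsometry.coe_toLinearIsometryEquiv, ← hgx]
  exact g.extend_apply ⟨x, Submodule.mem_span_singleton_self x⟩

variable [DecidableEq ι]

instance compactSpace_unitaryGroup : CompactSpace (unitaryGroup ι 𝕜) := by
  have hball : IsCompact (Set.univ.pi fun _ : ι => Set.univ.pi fun _ : ι =>
      Metric.closedBall (0 : 𝕜) 1) :=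
    isCompact_univ_pi fun _ => isCompact_univ_pi fun _ => isCompact_closedBall 0 1
  have hclosed : IsClosed (unitaryGroup ι 𝕜 : Set (Matrix ι ι 𝕜)) := isClosed_unitary
  exact isCompact_iff_compactSpace.mp <| hball.of_isClosed_subset hclosed
    fun _ hU i _ j _ => mem_closedBall_zero_iff.mpr (entry_norm_bound_of_unitary hU i j)

lemma star_mulVec_dotProduct_mulVec_of_mem_unitaryGroup {R : Type*} [CommRing R] [StarRing R]
    {U : Matrix ι ι R} (hU : U ∈ unitaryGroup ι R) (v w : ι → R) :
    star (U *ᵥ v) ⬝ᵥ (U *ᵥ w) = star v ⬝ᵥ w := by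
  rw [star_mulVec, ← dotProduct_mulVec, mulVec_mulVec, ← star_eq_conjTranspose,
    mem_unitaryGroup_iff'.mp hU, one_mulVec]

lemma exists_mem_unitaryGroup_mulVec_eq {v w : ι → 𝕜} (hv : star v ⬝ᵥ v = 1)
    (hw : star w ⬝ᵥ w = 1) : ∃ U ∈ unitaryGroup ι 𝕜, U *ᵥ v = w := by
  obtain ⟨f, hf⟩ := exists_linearIsometryEquiv_apply_eq (𝕜 := 𝕜)
    (norm_toLp_eq_one_iff.mpr hv) (norm_toLp_eq_one_iff.mpr hw)
  let e := EuclideanSpace.basisFun ι 𝕜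
  refine ⟨_, f.toMatrix_mem_unitaryGroup e e, ?_⟩
  have hrepr (x : EuclideanSpace 𝕜 ι) : ⇑(e.toBasis.repr x) = x.ofLp := by
    ext i
    simp only [e, OrthonormalBasis.coe_toBasis_repr_apply, EuclideanSpace.basisFun_repr]
  have hfv := LinearMap.toMatrix_mulVec_repr e.toBasis e.toBasis f.toLinearMap (WithLp.toLp 2 v)
  rw [hrepr, hrepr] at hfv
  exact hfv.trans (congrArg WithLp.ofLp hf)

end UnitaryMatrices

section VecTensor

variable {α β α' β' : Type*} [Fintype α] [Fintype β]

lemma kronecker_mulVec_vecTensor (A : Matrix α' α ℂ) (B : Matrix β' β ℂ) (u : α → ℂ) (v : β → ℂ) :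
    (A ⊗ₖ B) *ᵥ vecTensor u v = vecTensor (A *ᵥ u) (B *ᵥ v) := by
  ext ⟨i, j⟩
  simp only [vecTensor, mulVec, dotProduct, kroneckerMap_apply, Fintype.sum_prod_type,
    Fintype.sum_mul_sum, mul_mul_mul_comm]

lemma star_vecTensor_dotProduct_vecTensor (u u' : α → ℂ) (v v' : β → ℂ) :
    star (vecTensor u v) ⬝ᵥ vecTensor u' v' = (star u ⬝ᵥ u') * (star v ⬝ᵥ v') := by
  simp only [vecTensor, dotProduct, Pi.star_apply, star_mul', Fintype.sum_prod_type,
    Fintype.sum_mul_sum, mul_mul_mul_comm]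

lemma star_vecTensor_dotProduct_self_eq_one {u : α → ℂ} {v : β → ℂ} (hu : star u ⬝ᵥ u = 1)
    (hv : star v ⬝ᵥ v = 1) : star (vecTensor u v) ⬝ᵥ vecTensor u v = 1 := by
  rw [star_vecTensor_dotProduct_vecTensor, hu, hv, one_mul]

end VecTensor

section PureStates

variable {ι : Type*} [Fintype ι]

/-- The energy `⟨w, H w⟩` of the pure state `|w⟩⟨w|` under the Hamiltonian `H`. The real part is
taken to obtain a real number; for Hermitian `H` the product is already real. -/
noncomputable def energy (H : Matrix ι ι ℂ) (w : ι → ℂ) : ℝ := (star w ⬝ᵥ H *ᵥ w).re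

lemma continuous_energy (H : Matrix ι ι ℂ) : Continuous (energy H) := by
  unfold energy
  fun_prop

lemma trace_ketbra_mul_re (w : ι → ℂ) (H : Matrix ι ι ℂ) :
    (ketbra w * H).trace.re = energy H w := by
  rw [ketbra, vecMulVec_mul, trace_vecMulVec, dotProduct_comm, ← dotProduct_mulVec, energy]

lemma mul_ketbra_mul_star (A : Matrix ι ι ℂ) (w : ι → ℂ) :
    A * ketbra w * star A = ketbra (A *ᵥ w) := by
  rw [ketbra, mul_vecMulVec, vecMulVec_mul, star_eq_conjTranspose, ← star_mulVec, ketbra]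

variable [DecidableEq ι]

lemma energy_sub_energy_le_ergotropy_ketbra (H : Matrix ι ι ℂ) {w w' : ι → ℂ}
    (hw : star w ⬝ᵥ w = 1) (hw' : star w' ⬝ᵥ w' = 1) :
    energy H w - energy H w' ≤ ergotropy (ketbra w) H := by
  obtain ⟨U, hU, rfl⟩ := exists_mem_unitaryGroup_mulVec_eq hw hw'
  have hbdd : BddBelow (Set.range fun V : unitaryGroup ι ℂ => energy H (V.1 *ᵥ w)) :=
    (isCompact_range ((continuous_energy H).comp (by fun_prop))).bddBelow
  simp only [ergotropy, mul_ketbra_mul_star, trace_ketbra_mul_re]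
  exact sub_le_sub_left (ciInf_le hbdd ⟨U, hU⟩) _

lemma exists_localErgotropy_ketbra_vecTensor_eq {n m : ℕ}
    (H : Matrix (Fin n × Fin m) (Fin n × Fin m) ℂ) (u : Fin n → ℂ) (v : Fin m → ℂ) :
    ∃ U ∈ unitaryGroup (Fin n) ℂ, ∃ V ∈ unitaryGroup (Fin m) ℂ,
      localErgotropy (ketbra (vecTensor u v)) H =
        energy H (vecTensor u v) - energy H (vecTensor (U *ᵥ u) (V *ᵥ v)) := by
  let localEnergy (W : unitaryGroup (Fin n) ℂ × unitaryGroup (Fin m) ℂ) : ℝ :=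
    energy H (vecTensor (W.1.1 *ᵥ u) (W.2.1 *ᵥ v))
  have hcont : Continuous localEnergy :=
    (continuous_energy H).comp (by unfold vecTensor; fun_prop)
  obtain ⟨⟨U, V⟩, hUV⟩ := (isCompact_range hcont).sInf_mem (Set.range_nonempty _)
  refine ⟨U, U.2, V, V.2, ?_⟩
  simp only [localErgotropy, mul_ketbra_mul_star, trace_ketbra_mul_re, kronecker_mulVec_vecTensor]
  exact congrArg _ hUV.symm

lemma exists_energy_eq_iInf_eigenvalues [Nonempty ι] {H : Matrix ι ι ℂ} (hH : H.IsHermitian) :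
    ∃ w : ι → ℂ, star w ⬝ᵥ w = 1 ∧ energy H w = ⨅ p, hH.eigenvalues p := by
  obtain ⟨p, hp⟩ := exists_eq_ciInf_of_finite (f := hH.eigenvalues)
  refine ⟨hH.eigenvectorBasis p, norm_toLp_eq_one_iff.mp (hH.eigenvectorBasis.norm_eq_one p), ?_⟩
  rw [← hp]
  exact (hH.eigenvalues_eq p).symm

end PureStates

theorem product_state_positive_ergotropicGap_general {n m : ℕ}
    {H : Matrix (Fin n × Fin m) (Fin n × Fin m) ℂ}
    (hground : ∀ (u : Fin n → ℂ) (v : Fin m → ℂ), star u ⬝ᵥ u = 1 → star v ⬝ᵥ v = 1 →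
      ∃ w : Fin n × Fin m → ℂ, star w ⬝ᵥ w = 1 ∧ energy H w < energy H (vecTensor u v))
    {u₀ : Fin n → ℂ} {v₀ : Fin m → ℂ} (hu₀ : star u₀ ⬝ᵥ u₀ = 1) (hv₀ : star v₀ ⬝ᵥ v₀ = 1) :
    localErgotropy (ketbra (vecTensor u₀ v₀)) H < ergotropy (ketbra (vecTensor u₀ v₀)) H := by
  obtain ⟨U, hU, V, hV, hlocal⟩ := exists_localErgotropy_ketbra_vecTensor_eq H u₀ v₀
  obtain ⟨w, hw, hlt⟩ := hground (U *ᵥ u₀) (V *ᵥ v₀)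
    (by rw [star_mulVec_dotProduct_mulVec_of_mem_unitaryGroup hU, hu₀])
    (by rw [star_mulVec_dotProduct_mulVec_of_mem_unitaryGroup hV, hv₀])
  have hunit := star_vecTensor_dotProduct_self_eq_one hu₀ hv₀
  calc
    localErgotropy (ketbra (vecTensor u₀ v₀)) H
      = energy H (vecTensor u₀ v₀) - energy H (vecTensor (U *ᵥ u₀) (V *ᵥ v₀)) := hlocal
    _ < energy H (vecTensor u₀ v₀) - energy H w := sub_lt_sub_left hlt _
    _ ≤ ergotropy (ketbra (vecTensor u₀ v₀)) H := energy_sub_energy_le_ergotropy_ketbra H hunit hw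

/-- if every product state has energy strictly above the ground energy,
then every pure product state has strictly positive ergotropic gap. -/
theorem product_state_positive_ergotropicGap {n m : ℕ}
    {H : Matrix (Fin n × Fin m) (Fin n × Fin m) ℂ} (hH : H.IsHermitian)
    (hground : ∀ (u : Fin n → ℂ) (v : Fin m → ℂ),
      star u ⬝ᵥ u = 1 → star v ⬝ᵥ v = 1 →
      (⨅ p, hH.eigenvalues p) <
        (star (vecTensor u v) ⬝ᵥ H.mulVec (vecTensor u v)).re)
    (u₀ : Fin n → ℂ) (v₀ : Fin m → ℂ)
    (hu₀ : star u₀ ⬝ᵥ u₀ = 1) (hv₀ : star v₀ ⬝ᵥ v₀ = 1) :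
    localErgotropy (ketbra (vecTensor u₀ v₀)) H
      < ergotropy (ketbra (vecTensor u₀ v₀)) H := by
  have := nonempty_of_dotProduct_eq_one (star_vecTensor_dotProduct_self_eq_one hu₀ hv₀)
  obtain ⟨w, hw, hE⟩ := exists_energy_eq_iInf_eigenvalues hH
  exact product_state_positive_ergotropicGap_general
    (fun u v hu hv => ⟨w, hw, hE.trans_lt (hground u v hu hv)⟩) hu₀ hv₀
end
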